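/- arXiv:1207.3769 — 3 statements merged into one kernel-verified Lean document; each statement's English description precedes it below -/
import Mathlib

section
/- Let A₀ ⊆ A be rings such that A is free as a left and right A₀-module, and A₀ is a direct summand of A as an (A₀, A₀)-bimodule. If a left A₀-module M has infinite projective dimension over A₀, then the left A-module A ⊗_{A₀} M has infinite projective dimension over A. -/
open CategoryTheory
open scoped TensorProduct

/-- The `i`-th Ext group of two `A`-modules, as a `ℤ`-module. -/
noncomputable def extMod (A : Type) [Ring A] (i : ℕ) (M N : ModuleCat A) : ModuleCat ℤ :=
  ((Ext ℤ (ModuleCat A) i).obj (Opposite.op M)).obj N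

/-- `M` has projective dimension `≤ r` over `A`, expressed via vanishing of `Ext^i(M, -)`
for `i > r`. -/
def projDimLE (A : Type) [Ring A] (M : ModuleCat A) (r : ℕ) : Prop :=
  ∀ (N : ModuleCat A) (i : ℕ), r < i → Subsingleton (extMod A i M N)

/-- The defining relations of the (noncommutative) tensor product `A ⊗_{A₀} M`,
inside `A ⊗_ℤ M`. -/
def tensorRel (A₀ A : Type) [Ring A₀] [Ring A] (f : A₀ →+* A)
    (M : Type) [AddCommGroup M] [Module A₀ M] : Submodule A (TensorProduct ℤ A M) :=
  Submodule.span A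
    {x | ∃ (a : A) (r : A₀) (m : M), x = (a * f r) ⊗ₜ[ℤ] m - a ⊗ₜ[ℤ] (r • m)}

/-- The tensor product `A ⊗_{A₀} M`, as a left `A`-module. -/
abbrev TensorOver (A₀ A : Type) [Ring A₀] [Ring A] (f : A₀ →+* A)
    (M : Type) [AddCommGroup M] [Module A₀ M] : Type :=
  TensorProduct ℤ A M ⧸ tensorRel A₀ A f M

namespace Stmt2Aux

section
variable {A₀ A : Type} [Ring A₀] [Ring A] (f : A₀ →+* A)

/-- class of a pure tensor -/
def tm (M : Type) [AddCommGroup M] [Module A₀ M] (a : A) (m : M) : TensorOver A₀ A f M :=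
  Submodule.Quotient.mk (a ⊗ₜ[ℤ] m)

variable {M : Type} [AddCommGroup M] [Module A₀ M]

lemma tm_add_left (a a' : A) (m : M) : tm f M (a + a') m = tm f M a m + tm f M a' m := by
  simp only [tm, TensorProduct.add_tmul, Submodule.Quotient.mk_add]

lemma tm_add_right (a : A) (m m' : M) : tm f M a (m + m') = tm f M a m + tm f M a m' := by
  simp only [tm, TensorProduct.tmul_add, Submodule.Quotient.mk_add]

lemma tm_zero_right (a : A) : tm f M a 0 = 0 := by
  simp only [tm, TensorProduct.tmul_zero, Submodule.Quotient.mk_zero]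

lemma tm_smul (a b : A) (m : M) : a • tm f M b m = tm f M (a * b) m := by
  simp only [tm, ← Submodule.Quotient.mk_smul, TensorProduct.smul_tmul', smul_eq_mul]

lemma tm_rel (a : A) (r : A₀) (m : M) : tm f M (a * f r) m = tm f M a (r • m) := by
  refine (Submodule.Quotient.eq _).2 ?_
  exact Submodule.subset_span ⟨a, r, m, rfl⟩

lemma tm_induction {p : TensorOver A₀ A f M → Prop} (h0 : p 0)
    (ht : ∀ a m, p (tm f M a m)) (ha : ∀ x y, p x → p y → p (x + y)) (x) : p x := by
  obtain ⟨x, rfl⟩ := Submodule.Quotient.mk_surjective _ x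
  induction x using TensorProduct.induction_on with
  | zero => simpa using h0
  | tmul a m => exact ht a m
  | add x y hx hy => rw [Submodule.Quotient.mk_add]; exact ha _ _ hx hy

variable {f}

/-- universal property, additive version -/
noncomputable def liftAdd {B : Type} [AddCommGroup B] (β : A →+ M →+ B)
    (h : ∀ a r m, β (a * f r) m = β a (r • m)) : TensorOver A₀ A f M →+ B :=
  QuotientAddGroup.lift (tensorRel A₀ A f M).toAddSubgroup
    (TensorProduct.liftAddHom β (by intro r a m; rw [map_zsmul, map_zsmul]; rfl)) (by
      intro x hx
      change x ∈ (tensorRel A₀ A f M).toAddSubmonoid at hx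
      rw [tensorRel, Submodule.span_eq_closure] at hx
      rw [AddMonoidHom.mem_ker]
      induction hx using AddSubmonoid.closure_induction with
      | mem x hx =>
        obtain ⟨c, -, y, ⟨a, r, m, rfl⟩, rfl⟩ := Set.mem_smul.1 hx
        simp [smul_sub, TensorProduct.smul_tmul', ← mul_assoc, h]
      | zero => simp
      | add x y _ _ hx hy => rw [map_add, hx, hy, add_zero])

lemma liftAdd_tm {B : Type} [AddCommGroup B] (β : A →+ M →+ B)
    (h : ∀ a r m, β (a * f r) m = β a (r • m)) (a : A) (m : M) :
    liftAdd β h (tm f M a m) = β a m := rfl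

lemma addHom_ext {B : Type} [AddCommGroup B] {g h : TensorOver A₀ A f M →+ B}
    (H : ∀ a m, g (tm f M a m) = h (tm f M a m)) : g = h := by
  ext x
  induction x using tm_induction with
  | h0 => simp
  | ht a m => exact H a m
  | ha x y hx hy => rw [map_add, map_add, hx, hy]

lemma addHom_smul {B : Type} [AddCommGroup B] [Module A B] (L : TensorOver A₀ A f M →+ B)
    (H : ∀ a b m, L (tm f M (a * b) m) = a • L (tm f M b m)) (a : A) (x) :
    L (a • x) = a • L x := by
  induction x using tm_induction with
  | h0 => rw [smul_zero, map_zero, smul_zero]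
  | ht b m => rw [tm_smul, H]
  | ha x y hx hy => rw [smul_add, map_add, map_add, hx, hy, smul_add]

/-- universal property, linear version -/
noncomputable def liftLin {B : Type} [AddCommGroup B] [Module A B] (φ : M →+ B)
    (h : ∀ (r : A₀) m, φ (r • m) = f r • φ m) : TensorOver A₀ A f M →ₗ[A] B where
  toFun := liftAdd (f := f)
    (AddMonoidHom.mk' (fun a => AddMonoidHom.mk' (fun m => a • φ m) (by simp))
      (by intro a b; ext m; simp [add_smul])) (by intro a r m; simp [h, mul_smul])
  map_add' := map_add _
  map_smul' := by
    intro a x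
    exact addHom_smul _ (fun a b m => by
      rw [liftAdd_tm, liftAdd_tm]; exact mul_smul a b (φ m)) a x

lemma liftLin_tm {B : Type} [AddCommGroup B] [Module A B] (φ : M →+ B)
    (h : ∀ (r : A₀) m, φ (r • m) = f r • φ m) (a : A) (m : M) :
    liftLin φ h (tm f M a m) = a • φ m := rfl

lemma lin_ext {B : Type} [AddCommGroup B] [Module A B] {g h : TensorOver A₀ A f M →ₗ[A] B}
    (H : ∀ a m, g (tm f M a m) = h (tm f M a m)) : g = h := by
  have := addHom_ext (g := g.toAddMonoidHom) (h := h.toAddMonoidHom) H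
  exact LinearMap.ext fun x => DFunLike.congr_fun this x

variable (f) in
/-- functoriality -/
noncomputable def mapLin {N : Type} [AddCommGroup N] [Module A₀ N] (g : M →ₗ[A₀] N) :
    TensorOver A₀ A f M →ₗ[A] TensorOver A₀ A f N :=
  liftLin (AddMonoidHom.mk' (fun m => tm f N 1 (g m)) (by intro a b; rw [map_add, tm_add_right]))
    (by
      intro r m
      simp only [AddMonoidHom.mk'_apply, map_smul, tm_smul]
      rw [← tm_rel]; simp)

lemma mapLin_tm {N : Type} [AddCommGroup N] [Module A₀ N] (g : M →ₗ[A₀] N) (a : A) (m : M) :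
    mapLin f g (tm f M a m) = tm f N a (g m) := by
  rw [mapLin, liftLin_tm]; simp [tm_smul]

variable (f) in
/-- the functor -/
noncomputable def T : ModuleCat.{0} A₀ ⥤ ModuleCat.{0} A where
  obj M := ModuleCat.of A (TensorOver A₀ A f M)
  map g := ModuleCat.ofHom (mapLin f g.hom)
  map_id M := by
    ext1; apply lin_ext; intro a m; simp [mapLin_tm]
  map_comp g h := by
    ext1; apply lin_ext; intro a m; simp [mapLin_tm]

instance : (T f).Additive where
  map_add {M N g h} := by
    ext1; apply lin_ext; intro a m
    change mapLin f (g.hom + h.hom) _ = mapLin f g.hom (tm f M a m) + mapLin f h.hom (tm f M a m)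
    rw [mapLin_tm, mapLin_tm, mapLin_tm, LinearMap.add_apply, tm_add_right]

instance : (T f).PreservesProjectiveObjects where
  projective_obj {P} hP := by
    constructor
    intro X E φ e he
    have he' : Epi ((ModuleCat.restrictScalars f).map e) := inferInstance
    let φ' : P ⟶ (ModuleCat.restrictScalars f).obj E := ModuleCat.ofHom
      (Y := (ModuleCat.restrictScalars f).obj E)
      { toFun := fun m => show (ModuleCat.restrictScalars f).obj E from φ.hom (tm f P 1 m)
        map_add' := by intro a b; rw [tm_add_right]; exact map_add φ.hom _ _
        map_smul' := by
          intro r m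
          rw [← tm_rel, one_mul]
          have := map_smul φ.hom (f r) (tm f P 1 m)
          rw [tm_smul, mul_one] at this
          exact this }
    let ψ := Projective.factorThru φ' ((ModuleCat.restrictScalars f).map e)
    have hψ : ψ ≫ _ = φ' := Projective.factorThru_comp φ' ((ModuleCat.restrictScalars f).map e)
    let ψ' : P →+ ((ModuleCat.restrictScalars f).obj X) := ψ.hom.toAddMonoidHom
    have hs : ∀ (r : A₀) (m : P), (ψ' (r • m) : X) = f r • (ψ' m : X) :=
      fun r m => map_smul ψ.hom r m
    refine ⟨ModuleCat.ofHom (liftLin (f := f) (B := X) ψ' hs), ?_⟩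
    ext1; apply lin_ext; intro a m
    have h1 : e.hom (ψ' m) = φ.hom (tm f P 1 m) :=
      congrArg (fun k => k.hom m) hψ
    have h2 := map_smul φ.hom a (tm f P 1 m)
    rw [tm_smul, mul_one] at h2
    have h3 : e.hom (a • (show X from ψ' m)) = a • e.hom (show X from ψ' m) :=
      map_smul e.hom a _
    exact h3.trans ((congrArg (fun z => a • z) h1).trans h2.symm)

end

section
variable {A₀ A : Type} [Ring A₀] [Ring A] {f : A₀ →+* A}

/-- exactness of `A ⊗ -` from coordinates on the right -/
lemma exact_of_coord {ι : Type} (b : ι → A) (c : A →+ (ι →₀ A₀))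
    (hc : ∀ a r i, c (a * f r) i = c a i * r)
    (hb : ∀ a, (c a).sum (fun i s => b i * f s) = a)
    {M N K : Type} [AddCommGroup M] [Module A₀ M] [AddCommGroup N] [Module A₀ N]
    [AddCommGroup K] [Module A₀ K] (g : M →ₗ[A₀] N) (h : N →ₗ[A₀] K)
    (H : ∀ n, h n = 0 → ∃ m, g m = n) (x : TensorOver A₀ A f N)
    (hx : mapLin f h x = 0) : ∃ y, mapLin f g y = x := by
  classical
  -- coordinates
  let Φ : ∀ (N : Type) [AddCommGroup N] [Module A₀ N], TensorOver A₀ A f N →+ (ι → N) :=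
    fun N _ _ => liftAdd (f := f)
      (AddMonoidHom.mk' (fun a => AddMonoidHom.mk' (fun n i => c a i • n)
        (by intro m n; ext i; simp))
      (by intro a b; ext n i; simp [add_smul]))
      (by intro a r m; ext i; simp [hc, mul_smul])
  have hΦ : ∀ (N : Type) [AddCommGroup N] [Module A₀ N] a (n : N) i,
    Φ N (tm f N a n) i = c a i • n := fun N _ _ a n i => rfl
  have key : ∀ x : TensorOver A₀ A f N, ∃ s : Finset ι,
      ∀ t, s ⊆ t → x = ∑ i ∈ t, tm f N (b i) (Φ N x i) := by
    intro x
    induction x using tm_induction with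
    | h0 => exact ⟨∅, fun t _ => by simp [tm_zero_right]⟩
    | ht a n =>
      refine ⟨(c a).support, fun t ht => ?_⟩
      simp only [hΦ, ← tm_rel]
      have h1 : a = ∑ i ∈ t, b i * f (c a i) := by
        conv_lhs => rw [← hb a]
        exact Finsupp.sum_of_support_subset _ ht _ (by simp)
      conv_lhs => rw [h1]
      exact map_sum (AddMonoidHom.mk' (fun a => tm f N a n) (fun a a' => tm_add_left f a a' n)) _ _
    | ha x y hx hy =>
      obtain ⟨s, hs⟩ := hx
      obtain ⟨s', hs'⟩ := hy
      refine ⟨s ∪ s', fun t ht => ?_⟩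
      conv_lhs => rw [hs t (Finset.union_subset_left ht), hs' t (Finset.union_subset_right ht)]
      rw [← Finset.sum_add_distrib]
      refine Finset.sum_congr rfl fun i _ => ?_
      rw [map_add, Pi.add_apply, tm_add_right]
  have nat : ∀ x i, Φ K (mapLin f h x) i = h (Φ N x i) := by
    intro x i
    induction x using tm_induction with
    | h0 => simp
    | ht a n => rw [mapLin_tm, hΦ, hΦ, map_smul]
    | ha x y hx hy => simp [hx, hy]
  have hm : ∀ i, ∃ m, g m = Φ N x i := fun i => H _ (by rw [← nat, hx]; simp)
  choose m hm using hm
  obtain ⟨s, hs⟩ := key x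
  refine ⟨∑ i ∈ s, tm f M (b i) (m i), ?_⟩
  rw [map_sum, hs s (Finset.Subset.refl s)]
  simp only [mapLin_tm, hm]

lemma exists_coord (hfreeR : Module.Free A₀ᵐᵒᵖ
      ((ModuleCat.restrictScalars (RingHom.op f)).obj (ModuleCat.of Aᵐᵒᵖ Aᵐᵒᵖ))) :
    ∃ (ι : Type) (b : ι → A) (c : A →+ (ι →₀ A₀)),
    (∀ a r i, c (a * f r) i = c a i * r) ∧ (∀ a, (c a).sum (fun i s => b i * f s) = a) := by
  let X := (ModuleCat.restrictScalars (RingHom.op f)).obj (ModuleCat.of Aᵐᵒᵖ Aᵐᵒᵖ)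
  let B := Module.Free.chooseBasis A₀ᵐᵒᵖ X
  let b : Module.Free.ChooseBasisIndex A₀ᵐᵒᵖ X → A := fun i => MulOpposite.unop (B i : Aᵐᵒᵖ)
  let o : A →+ X := (MulOpposite.opAddEquiv : A ≃+ Aᵐᵒᵖ).toAddMonoidHom
  let u : X →+ A := (MulOpposite.opAddEquiv : A ≃+ Aᵐᵒᵖ).symm.toAddMonoidHom
  refine ⟨_, b,
    (Finsupp.mapRange.addMonoidHom (MulOpposite.opAddEquiv : A₀ ≃+ A₀ᵐᵒᵖ).symm.toAddMonoidHom).comp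
      (B.repr.toLinearMap.toAddMonoidHom.comp o), ?_, ?_⟩
  · intro a r i
    have : o (a * f r) = MulOpposite.op r • o a := rfl
    simp [this]
  · intro a
    have := B.linearCombination_repr (o a)
    rw [Finsupp.linearCombination_apply, Finsupp.sum] at this
    have h2 := congrArg u this
    rw [map_sum] at h2
    refine Eq.trans ?_ h2
    simp only [AddMonoidHom.comp_apply, Finsupp.mapRange.addMonoidHom_apply]
    rw [Finsupp.sum_mapRange_index (by simp)]
    rfl

lemma preservesHomology (hfreeR : Module.Free A₀ᵐᵒᵖ
      ((ModuleCat.restrictScalars (RingHom.op f)).obj (ModuleCat.of Aᵐᵒᵖ Aᵐᵒᵖ))) :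
    (T f).PreservesHomology := by
  obtain ⟨ι, b, c, hc, hb⟩ := exists_coord hfreeR
  apply Functor.preservesHomology_of_map_exact
  intro S hS
  rw [ShortComplex.moduleCat_exact_iff] at hS ⊢
  intro x hx
  exact exact_of_coord b c hc hb S.f.hom S.g.hom hS x hx

end

lemma ext_subsingleton_iff {A : Type} [Ring A] {M : ModuleCat.{0} A} (P : ProjectiveResolution M)
    (N : ModuleCat.{0} A) (j : ℕ) :
    Subsingleton (extMod A (j + 1) M N) ↔
      ∀ φ : P.complex.X (j + 1) ⟶ N, P.complex.d (j + 2) (j + 1) ≫ φ = 0 →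
        ∃ ψ : P.complex.X j ⟶ N, P.complex.d (j + 1) j ≫ ψ = φ := by
  rw [← ModuleCat.isZero_iff_subsingleton]
  rw [extMod, (P.isoExt (R := ℤ) (j + 1) N).isZero_iff,
    ← HomologicalComplex.exactAt_iff_isZero_homology,
    HomologicalComplex.exactAt_iff' _ j (j + 1) (j + 2) (by simp) (by simp),
    ShortComplex.moduleCat_exact_iff]
  rfl

end Stmt2Aux

/-- let `A₀ ⊆ A` be rings (inclusion `f`) such that `A` is free as a left and
right `A₀`-module, and `A₀` is a direct summand of `A` as an `(A₀, A₀)`-bimodule (i.e. there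
is a bimodule retraction `π : A → A₀` with `π ∘ f = id`).  If a left `A₀`-module `M` has
infinite projective dimension over `A₀`, then `A ⊗_{A₀} M` has infinite projective dimension
over `A`. -/
theorem stmt2 (A₀ A : Type) [Ring A₀] [Ring A] (f : A₀ →+* A)
    (hf : Function.Injective f)
    (hfreeL : Module.Free A₀ ((ModuleCat.restrictScalars f).obj (ModuleCat.of A A)))
    (hfreeR : Module.Free A₀ᵐᵒᵖ
      ((ModuleCat.restrictScalars (RingHom.op f)).obj (ModuleCat.of Aᵐᵒᵖ Aᵐᵒᵖ)))
    (π : A →+ A₀)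
    (hπl : ∀ (r : A₀) (a : A), π (f r * a) = r * π a)
    (hπr : ∀ (a : A) (r : A₀), π (a * f r) = π a * r)
    (hπf : ∀ r : A₀, π (f r) = r)
    (M : ModuleCat A₀)
    (hM : ∀ r : ℕ, ¬ projDimLE A₀ M r) :
    ∀ r : ℕ, ¬ projDimLE A (ModuleCat.of A (TensorOver A₀ A f M)) r := by
  intro r hr
  apply hM r
  intro N i hi
  obtain ⟨j, rfl⟩ : ∃ j, i = j + 1 := ⟨i - 1, by omega⟩
  have := Stmt2Aux.preservesHomology hfreeR
  let P := projectiveResolution M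
  have h1 := (Stmt2Aux.ext_subsingleton_iff ((Stmt2Aux.T f).mapProjectiveResolution P)
    ((Stmt2Aux.T f).obj N) j).1 (hr _ _ hi)
  rw [Stmt2Aux.ext_subsingleton_iff P]
  intro φ hφ
  obtain ⟨ψ, hψ⟩ := h1 ((Stmt2Aux.T f).map φ) (by
    change (Stmt2Aux.T f).map _ ≫ (Stmt2Aux.T f).map φ = 0
    rw [← Functor.map_comp, hφ, Functor.map_zero])
  change (Stmt2Aux.T f).map (P.complex.d (j + 1) j) ≫ ψ = _ at hψ
  let Q := P.complex.X j
  let ρ : TensorOver A₀ A f N →+ N := Stmt2Aux.liftAdd (f := f)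
    (AddMonoidHom.mk' (fun a => AddMonoidHom.mk' (fun n => π a • n) (by simp))
      (by intro a b; ext m; simp [add_smul])) (by intro a r m; simp [hπr, mul_smul])
  have hρ : ∀ a n, ρ (Stmt2Aux.tm f N a n) = π a • n := fun _ _ => rfl
  have hρs : ∀ (r : A₀) x, ρ (f r • x) = r • ρ x := by
    intro r x
    induction x using Stmt2Aux.tm_induction with
    | h0 => simp
    | ht a n => rw [Stmt2Aux.tm_smul, hρ, hρ, hπl, mul_smul]
    | ha x y hx hy => rw [smul_add, map_add, map_add, hx, hy, smul_add]
  let ψ' : TensorOver A₀ A f Q →ₗ[A] TensorOver A₀ A f N := ψ.hom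
  refine ⟨ModuleCat.ofHom
    { toFun := fun q => ρ (ψ' (Stmt2Aux.tm f Q 1 q))
      map_add' := by intro a b; rw [Stmt2Aux.tm_add_right, map_add, map_add]
      map_smul' := by
        intro r q
        rw [← Stmt2Aux.tm_rel, one_mul, RingHom.id_apply, ← hρs, ← map_smul, Stmt2Aux.tm_smul,
          mul_one] }, ?_⟩
  ext p
  have h2 : ψ' (Stmt2Aux.tm f Q 1 (P.complex.d (j + 1) j p)) = Stmt2Aux.tm f N 1 (φ p) := by
    have := congrArg (fun k => k.hom (Stmt2Aux.tm f (P.complex.X (j + 1)) 1 p)) hψ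
    change ψ' (Stmt2Aux.mapLin f (P.complex.d (j + 1) j).hom _) = Stmt2Aux.mapLin f φ.hom _ at this
    rw [Stmt2Aux.mapLin_tm, Stmt2Aux.mapLin_tm] at this
    exact this
  change ρ (ψ' (Stmt2Aux.tm f Q 1 (P.complex.d (j + 1) j p))) = φ p
  rw [h2, hρ, ← map_one f, hπf, one_smul]
end

section
/- Let A be a ring with an exact sequence of (A,A)-bimodules 0 → B_d → ... → B_0 → A → 0, where each B_j is a finite direct sum of bimodules of the form A ⊗_{A₀} A for subrings A₀ over which A is free as a left and as a right module. Let M be a left A-module such that for every subring A₀ occurring in the resolution, the projective dimension of M as an A₀-module is ≤ r. Then M has projective dimension ≤ d + r as an A-module. -/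
open CategoryTheory
open scoped TensorProduct DirectSum

/-- The enveloping ring `A ⊗_ℤ Aᵐᵒᵖ`; left modules over it are `(A,A)`-bimodules. -/
abbrev Env (A : Type) [Ring A] : Type := TensorProduct ℤ A Aᵐᵒᵖ

/-- `A` is a module over its enveloping ring (i.e. an `(A,A)`-bimodule). -/
noncomputable instance envModuleSelf (A : Type) [Ring A] : Module (Env A) A :=
  TensorProduct.Algebra.module

/-- The left ideal of `Env A` generated by the elements `f r ⊗ 1 - 1 ⊗ (f r)ᵒᵖ`, so that
`Env A / envRel A A₀ f` is the bimodule `A ⊗_{A₀} A`. -/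
def envRel (A : Type) [Ring A] (A₀ : Type) [Ring A₀] (f : A₀ →+* A) :
    Submodule (Env A) (Env A) :=
  Submodule.span (Env A)
    {x | ∃ r : A₀, x = (f r) ⊗ₜ[ℤ] (1 : Aᵐᵒᵖ) - (1 : A) ⊗ₜ[ℤ] (MulOpposite.op (f r))}

/-- The `(A,A)`-bimodule `A ⊗_{A₀} A`, realized as a quotient of the enveloping ring. -/
abbrev TensorAA (A : Type) [Ring A] (A₀ : Type) [Ring A₀] (f : A₀ →+* A) : Type :=
  Env A ⧸ envRel A A₀ f

lemma ext_iff_aux (A : Type) [Ring A] (M N : ModuleCat A) (P : ProjectiveResolution M) (i : ℕ) :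
    Subsingleton (extMod A (i + 1) M N) ↔
      ∀ φ : P.complex.X (i + 1) ⟶ N, P.complex.d (i + 2) (i + 1) ≫ φ = 0 →
        ∃ ψ : P.complex.X i ⟶ N, P.complex.d (i + 1) i ≫ ψ = φ := by
  rw [← ModuleCat.isZero_iff_subsingleton]
  refine (P.isoExt (R := ℤ) (i + 1) N).isZero_iff.trans ?_
  rw [← HomologicalComplex.exactAt_iff_isZero_homology,
    HomologicalComplex.exactAt_iff' _ i (i + 1) (i + 2) (by simp) (by simp),
    ShortComplex.moduleCat_exact_iff]
  rfl

lemma res_projective (A R : Type) [Ring A] [Ring R] (f : R →+* A)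
    [Module.Free R ((ModuleCat.restrictScalars f).obj (ModuleCat.of A A))] :
    (ModuleCat.restrictScalars.{0} f).PreservesProjectiveObjects where
  projective_obj {P} hP := by
    have : (ModuleCat.coextendScalars.{0} f).PreservesEpimorphisms := by
      constructor
      intro X Y g hg
      rw [ModuleCat.epi_iff_surjective] at hg ⊢
      intro y
      obtain ⟨h, hh⟩ := Module.projective_lifting_property g.hom
        (ModuleCat.CoextendScalars.equiv f Y y) hg
      refine ⟨(ModuleCat.CoextendScalars.equiv f X).symm h, ?_⟩
      apply ModuleCat.CoextendScalars.ext
      exact hh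
    exact (ModuleCat.restrictCoextendScalarsAdj f).map_projective P hP

lemma res_homology (A R : Type) [Ring A] [Ring R] (f : R →+* A) :
    (ModuleCat.restrictScalars.{0} f).PreservesHomology := by
  apply Functor.preservesHomology_of_map_exact
  intro S hS
  rw [ShortComplex.moduleCat_exact_iff] at hS ⊢
  exact hS

lemma ext_res (A R : Type) [Ring A] [Ring R] (f : R →+* A)
    [Module.Free R ((ModuleCat.restrictScalars f).obj (ModuleCat.of A A))]
    (M : ModuleCat A) (N : ModuleCat A) (P : ProjectiveResolution M) (i : ℕ)
    (h : Subsingleton (extMod R (i + 1) ((ModuleCat.restrictScalars f).obj M)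
      ((ModuleCat.restrictScalars f).obj N)))
    (φ : P.complex.X (i + 1) →+ N) (hφ : ∀ r x, φ (f r • x) = f r • φ x)
    (hd : ∀ x, φ ((P.complex.d (i + 2) (i + 1)).hom x) = 0) :
    ∃ ψ : P.complex.X i →+ N, (∀ r x, ψ (f r • x) = f r • ψ x) ∧
      ∀ x, ψ ((P.complex.d (i + 1) i).hom x) = φ x := by
  have := res_projective A R f
  have := res_homology A R f
  rw [ext_iff_aux _ _ _ ((ModuleCat.restrictScalars f).mapProjectiveResolution P)] at h
  obtain ⟨ψ, hψ⟩ := h (ModuleCat.ofHom (X := (ModuleCat.restrictScalars f).obj (P.complex.X (i + 1)))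
    (Y := (ModuleCat.restrictScalars f).obj N)
    { toFun := φ, map_add' := φ.map_add, map_smul' := fun r x => hφ r x }) (by
      ext x
      exact hd x)
  refine ⟨⟨⟨ψ.hom, map_zero ψ.hom⟩, map_add ψ.hom⟩, fun r x => LinearMap.map_smul ψ.hom r x, fun x => ?_⟩
  exact congrArg (fun g => g.hom x) hψ

/-- A bimodule seen as a left module. -/
def LeftA (A : Type) [Ring A] (B : Type) : Type := B

section LeftA
variable (A : Type) [Ring A] (B : Type) [AddCommGroup B] [Module (Env A) B]

instance : AddCommGroup (LeftA A B) := inferInstanceAs (AddCommGroup B)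

noncomputable instance : Module (Env A) (LeftA A B) := inferInstanceAs (Module (Env A) B)

noncomputable instance : Module A (LeftA A B) :=
  Module.compHom B (Algebra.TensorProduct.includeLeftRingHom : A →+* Env A)

variable {A B} in
lemma leftA_smul (a : A) (x : LeftA A B) :
    a • x = (show LeftA A B from ((a ⊗ₜ[ℤ] (1 : Aᵐᵒᵖ) : Env A) • (show B from x))) := rfl

/-- Right multiplication on a bimodule. -/
noncomputable def rmulA (a : A) : LeftA A B →ₗ[A] LeftA A B where
  toFun x := (((1 : A) ⊗ₜ[ℤ] (MulOpposite.op a) : Env A) • (show B from x) : B)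
  map_add' x y := smul_add (M := Env A) (A := B) _ _ _
  map_smul' c x := by
    change (_ : Env A) • ((_ : Env A) • x) = (_ : Env A) • ((_ : Env A) • x)
    rw [smul_smul, smul_smul]
    simp [Algebra.TensorProduct.includeLeftRingHom]

variable {A B} in
lemma rmulA_apply (a : A) (x : LeftA A B) : rmulA A B a x =
    (show LeftA A B from (((1 : A) ⊗ₜ[ℤ] (MulOpposite.op a) : Env A) • (show B from x))) := rfl

lemma rmulA_mul (a b : A) (x : LeftA A B) :
    rmulA A B (a * b) x = rmulA A B b (rmulA A B a x) := by
  change (_ : Env A) • x = (_ : Env A) • ((_ : Env A) • x)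
  rw [smul_smul]
  simp

lemma rmulA_one (x : LeftA A B) : rmulA A B 1 x = x := by
  change ((1 : A) ⊗ₜ[ℤ] (MulOpposite.op 1) : Env A) • x = x
  exact one_smul (Env A) x

lemma rmulA_add (a b : A) (x : LeftA A B) :
    rmulA A B (a + b) x = rmulA A B a x + rmulA A B b x := by
  change (_ : Env A) • x = (_ : Env A) • x + (_ : Env A) • x
  rw [← add_smul]
  simp [TensorProduct.tmul_add]

lemma rmulA_zero (x : LeftA A B) : rmulA A B 0 x = 0 := by
  have := rmulA_add A B 0 0 x
  simpa using this

/-- Left-linear maps from a bimodule to a left module. -/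
def HomL (N : Type) [AddCommGroup N] [Module A N] : Type := LeftA A B →ₗ[A] N

variable (N : Type) [AddCommGroup N] [Module A N]

noncomputable instance : AddCommGroup (HomL A B N) :=
  inferInstanceAs (AddCommGroup (LeftA A B →ₗ[A] N))

/-- Underlying map. -/
def HomL.fn {A B N} [Ring A] [AddCommGroup B] [Module (Env A) B] [AddCommGroup N] [Module A N]
    (φ : HomL A B N) : LeftA A B →ₗ[A] N := φ

noncomputable instance : SMul A (HomL A B N) := ⟨fun a φ => φ.fn.comp (rmulA A B a)⟩

variable {A B N}

@[ext] lemma HomL.ext {φ ψ : HomL A B N} (h : ∀ x, φ.fn x = ψ.fn x) : φ = ψ := LinearMap.ext h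

@[simp] lemma HomL.smul_fn (a : A) (φ : HomL A B N) (x) : (a • φ).fn x = φ.fn (rmulA A B a x) := rfl
@[simp] lemma HomL.add_fn (φ ψ : HomL A B N) (x) : (φ + ψ).fn x = φ.fn x + ψ.fn x := rfl
@[simp] lemma HomL.zero_fn (x) : (0 : HomL A B N).fn x = 0 := rfl

noncomputable instance : Module A (HomL A B N) where
  one_smul φ := by ext x; simp [rmulA_one]
  mul_smul a b φ := by ext x; simp [rmulA_mul]
  smul_zero a := by ext x; simp
  smul_add a φ ψ := by ext x; simp
  add_smul a b φ := by ext x; simp [rmulA_add]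
  zero_smul φ := by ext x; simp [rmulA_zero]

variable {C : Type} [AddCommGroup C] [Module (Env A) C]

/-- A bimodule map as a map of left modules. -/
def leftMap (g : B →ₗ[Env A] C) : LeftA A B →ₗ[A] LeftA A C where
  toFun x := g x
  map_add' := g.map_add
  map_smul' _ _ := g.map_smul _ _

lemma leftMap_rmul (g : B →ₗ[Env A] C) (a : A) (x) :
    leftMap g (rmulA A B a x) = rmulA A C a (leftMap g x) := g.map_smul _ _

variable (N) in
/-- Precomposition. -/
noncomputable def precompL (g : B →ₗ[Env A] C) : HomL A C N →ₗ[A] HomL A B N where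
  toFun φ := φ.fn.comp (leftMap g)
  map_add' φ ψ := rfl
  map_smul' a φ := by
    apply HomL.ext
    intro x
    exact congrArg φ.fn (leftMap_rmul g a x).symm

@[simp] lemma precompL_fn (g : B →ₗ[Env A] C) (φ : HomL A C N) (x) :
    (precompL N g φ).fn x = φ.fn (leftMap g x) := rfl

end LeftA

/-- Cohomology vanishing at a spot. -/
def VE {A : Type} [Ring A] {M : ModuleCat.{0} A} (P : ProjectiveResolution M) (i : ℕ)
    (X : Type) [AddCommGroup X] [Module A X] : Prop :=
  match i with
  | 0 => ∀ φ : P.complex.X 0 →ₗ[A] X, φ.comp (P.complex.d 1 0).hom = 0 → φ = 0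
  | i + 1 => ∀ φ : P.complex.X (i + 1) →ₗ[A] X, φ.comp (P.complex.d (i + 2) (i + 1)).hom = 0 →
      ∃ ψ : P.complex.X i →ₗ[A] X, ψ.comp (P.complex.d (i + 1) i).hom = φ

lemma ext_iff_VE (A : Type) [Ring A] (M N : ModuleCat A) (P : ProjectiveResolution M) (i : ℕ) :
    Subsingleton (extMod A (i + 1) M N) ↔ VE P (i + 1) N := by
  rw [ext_iff_aux _ _ _ P]
  constructor
  · intro h φ hφ
    obtain ⟨ψ, hψ⟩ := h (ModuleCat.ofHom φ) (ModuleCat.hom_ext hφ)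
    exact ⟨ψ.hom, congrArg ModuleCat.Hom.hom hψ⟩
  · intro h φ hφ
    obtain ⟨ψ, hψ⟩ := h φ.hom (congrArg ModuleCat.Hom.hom hφ)
    exact ⟨ModuleCat.ofHom ψ, ModuleCat.hom_ext hψ⟩

lemma res_proj_mod {A : Type} [Ring A] {M : ModuleCat.{0} A} (P : ProjectiveResolution M) (i : ℕ) :
    Module.Projective A (P.complex.X i) := by
  have := P.projective i
  exact (IsProjective.iff_projective _).mpr this

lemma res_dd {A : Type} [Ring A] {M : ModuleCat.{0} A} (P : ProjectiveResolution M) (i : ℕ) (x) :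
    (P.complex.d (i + 1) i).hom ((P.complex.d (i + 2) (i + 1)).hom x) = 0 :=
  congrArg (fun g => g.hom x) (P.complex.d_comp_d (i + 2) (i + 1) i)

lemma factor_inj {A Q X I Z : Type} [Ring A] [AddCommGroup Q] [Module A Q]
    [AddCommGroup X] [Module A X] [AddCommGroup I] [Module A I] [AddCommGroup Z] [Module A Z]
    (ι : X →ₗ[A] I) (p : I →ₗ[A] Z) (hι : Function.Injective ι) (hex : Function.Exact ι p)
    (ψ : Q →ₗ[A] I) (h : p.comp ψ = 0) : ∃ χ : Q →ₗ[A] X, ι.comp χ = ψ := by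
  have h1 : ∀ q, ∃ x, ι x = ψ q := fun q => (hex (ψ q)).mp (LinearMap.congr_fun h q)
  choose g hg using h1
  exact ⟨{ toFun := g, map_add' := fun a b => hι (by simp [hg]),
           map_smul' := fun a b => hι (by simp [hg]) }, LinearMap.ext hg⟩

lemma VE_shift {A : Type} [Ring A] {M : ModuleCat.{0} A} (P : ProjectiveResolution M) (i : ℕ)
    {X I Z : Type}
    [AddCommGroup X] [Module A X] [AddCommGroup I] [Module A I] [AddCommGroup Z] [Module A Z]
    (ι : X →ₗ[A] I) (p : I →ₗ[A] Z) (hι : Function.Injective ι) (hex : Function.Exact ι p)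
    (hp : Function.Surjective p) (hZ : VE P i Z) (hI : VE P (i + 1) I) : VE P (i + 1) X := by
  intro φ hφ
  obtain ⟨ψ, hψ⟩ := hI (ι.comp φ) (by rw [LinearMap.comp_assoc, hφ, LinearMap.comp_zero])
  have hpψ : (p.comp ψ).comp (P.complex.d (i + 1) i).hom = 0 := by
    rw [LinearMap.comp_assoc, hψ, ← LinearMap.comp_assoc, hex.linearMap_comp_eq_zero,
      LinearMap.zero_comp]
  suffices h : ∃ ψ' : P.complex.X i →ₗ[A] I, p.comp ψ' = 0 ∧
      ψ'.comp (P.complex.d (i + 1) i).hom = ι.comp φ by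
    obtain ⟨ψ', h1, h2⟩ := h
    obtain ⟨χ, hχ⟩ := factor_inj ι p hι hex ψ' h1
    refine ⟨χ, LinearMap.ext fun x => hι ?_⟩
    rw [← hχ] at h2
    exact LinearMap.congr_fun h2 x
  match i with
  | 0 => exact ⟨ψ, hZ _ hpψ, hψ⟩
  | i + 1 =>
    obtain ⟨χ, hχ⟩ := hZ _ hpψ
    have := res_proj_mod P i
    obtain ⟨χ', hχ'⟩ := Module.projective_lifting_property p χ hp
    refine ⟨ψ - χ'.comp (P.complex.d (i + 1) i).hom, ?_, ?_⟩
    · rw [LinearMap.comp_sub, ← LinearMap.comp_assoc, hχ', hχ, sub_self]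
    · rw [LinearMap.sub_comp, hψ]
      ext x
      simp [res_dd]

/-- `B` is the direct sum of `A ⊗ A`, characterized by generators. -/
structure GenBy (A : Type) [Ring A] (B : Type) [AddCommGroup B] [Module (Env A) B]
    {T : Type} (R : T → Type) [∀ t, Ring (R t)] (f : ∀ t, R t →+* A) (ω : T → LeftA A B) :
    Prop where
  central : ∀ t r, rmulA A B (f t r) (ω t) = f t r • ω t
  lift : ∀ (N : Type) [AddCommGroup N] [Module A N] (g : T → A →+ N),
    (∀ t r a, g t (f t r * a) = f t r • g t a) →
    ∃ h : LeftA A B →ₗ[A] N, ∀ t b, h (rmulA A B b (ω t)) = g t b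
  ext : ∀ (N : Type) [AddCommGroup N] [Module A N] (h h' : LeftA A B →ₗ[A] N),
    (∀ t b, h (rmulA A B b (ω t)) = h' (rmulA A B b (ω t))) → h = h'

section Gen
variable {A : Type} [Ring A] {B : Type} [AddCommGroup B] [Module (Env A) B]
    {T : Type} {R : T → Type} [∀ t, Ring (R t)] {f : ∀ t, R t →+* A} {ω : T → LeftA A B}

lemma GenBy.projective (hG : GenBy A B R f ω)
    (hfreeL : ∀ t, Module.Free (R t) ((ModuleCat.restrictScalars (f t)).obj (ModuleCat.of A A))) :
    Module.Projective A (LeftA A B) := by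
  refine Module.Projective.of_lifting_property'' fun p hp => ?_
  have key : ∀ t, ∃ g : A →+ (LeftA A B →₀ A), (∀ r a, g (f t r * a) = f t r • g a) ∧
      ∀ a, p (g a) = rmulA A B a (ω t) := by
    intro t
    have := hfreeL t
    let p' : (ModuleCat.restrictScalars (f t)).obj (ModuleCat.of A (LeftA A B →₀ A)) →ₗ[R t]
      (ModuleCat.restrictScalars (f t)).obj (ModuleCat.of A (LeftA A B)) :=
      ((ModuleCat.restrictScalars (f t)).map (ModuleCat.ofHom p)).hom
    let q : (ModuleCat.restrictScalars (f t)).obj (ModuleCat.of A A) →ₗ[R t]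
      (ModuleCat.restrictScalars (f t)).obj (ModuleCat.of A (LeftA A B)) :=
      { toFun := fun a => rmulA A B (show A from a) (ω t)
        map_add' := fun a b => rmulA_add A B _ _ _
        map_smul' := fun r a => by
          change rmulA A B (f t r * (show A from a)) (ω t) = f t r • rmulA A B _ (ω t)
          rw [rmulA_mul, hG.central, map_smul] }
    obtain ⟨h, hh⟩ := Module.projective_lifting_property p' q hp
    refine ⟨⟨⟨h, map_zero h⟩, map_add h⟩, fun r a => LinearMap.map_smul h r a, fun a => ?_⟩
    exact LinearMap.congr_fun hh a
  choose g hg hpg using key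
  obtain ⟨h, hh⟩ := hG.lift _ g hg
  refine ⟨h, hG.ext _ _ _ fun t b => ?_⟩
  simp [hh, hpg]

lemma GenBy.VE (hG : GenBy A B R f ω)
    (hfreeL : ∀ t, Module.Free (R t) ((ModuleCat.restrictScalars (f t)).obj (ModuleCat.of A A)))
    (M N : ModuleCat A) (P : ProjectiveResolution M) (i : ℕ)
    (h : ∀ t, Subsingleton (extMod (R t) (i + 1) ((ModuleCat.restrictScalars (f t)).obj M)
      ((ModuleCat.restrictScalars (f t)).obj N))) :
    VE P (i + 1) (HomL A B N) := by
  intro φ hφ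
  have key : ∀ t, ∃ ψ : P.complex.X i →+ N, (∀ r x, ψ (f t r • x) = f t r • ψ x) ∧
      ∀ x, ψ ((P.complex.d (i + 1) i).hom x) = (φ x).fn (ω t) := by
    intro t
    have := hfreeL t
    refine ext_res A (R t) (f t) M N P i (h t)
      ⟨⟨fun x => (φ x).fn (ω t), by simp⟩, fun x y => by simp⟩ (fun r x => ?_) (fun x => ?_)
    · change (φ (f t r • x)).fn (ω t) = f t r • (φ x).fn (ω t)
      rw [map_smul, HomL.smul_fn, hG.central, map_smul]
    · exact congrArg (fun a => HomL.fn a (ω t)) (LinearMap.congr_fun hφ x)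
  choose ψ hψ hψd using key
  have key2 : ∀ x : P.complex.X i, ∃ k : HomL A B N,
      ∀ t b, k.fn (rmulA A B b (ω t)) = ψ t (b • x) := by
    intro x
    refine hG.lift N (fun t => ⟨⟨fun b => ψ t (b • x), by simp⟩, fun a b => by simp [add_smul]⟩) ?_
    intro t r a
    change ψ t ((f t r * a) • x) = f t r • ψ t (a • x)
    rw [mul_smul, hψ]
  choose k hk using key2
  refine ⟨{ toFun := k, map_add' := fun x y => ?_, map_smul' := fun a x => ?_}, ?_⟩
  · refine hG.ext N _ _ fun t b => ?_
    change (k _).fn _ = (k x + k y).fn _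
    simp [hk]
  · refine hG.ext N _ _ fun t b => ?_
    change (k _).fn _ = (a • k x).fn _
    rw [HomL.smul_fn, ← rmulA_mul, hk, hk, mul_smul]
  · ext1 x
    refine hG.ext N _ _ fun t b => ?_
    change (k _).fn _ = (φ x).fn _
    rw [hk, ← map_smul, hψd, map_smul, HomL.smul_fn]

end Gen

lemma liftT {A R : Type} [Ring A] [Ring R] (f : R →+* A) (N : Type) [AddCommGroup N] [Module A N]
    (g : A →+ N) (hg : ∀ r a, g (f r * a) = f r • g a) :
    ∃ (h : TensorAA A R f → N) (L : Env A →+ N), (∀ x, h (Submodule.Quotient.mk x) = L x) ∧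
      ∀ a b, L (a ⊗ₜ[ℤ] MulOpposite.op b) = a • g b := by
  let L : Env A →+ N := (TensorProduct.lift (LinearMap.mk₂ ℤ (fun (a : A) (b : Aᵐᵒᵖ) => a • g b.unop)
    (by intros; simp [add_smul]) (by intros; rw [smul_assoc]) (by intros; simp)
    (by intros c a b; rw [MulOpposite.unop_smul, map_zsmul, smul_comm]))).toAddMonoidHom
  have hL : ∀ a b, L (a ⊗ₜ b) = a • g b.unop := fun a b => rfl
  have hker : ∀ x ∈ envRel A R f, ∀ y : Env A, L (y * x) = 0 := by
    intro x hx
    refine Submodule.span_induction ?_ (by simp) (fun x y _ _ hx hy z => by simp [mul_add, hx, hy])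
      ?_ hx
    · rintro _ ⟨r, rfl⟩ y
      induction y using TensorProduct.induction_on with
      | zero => simp
      | tmul a b => simp [hL, mul_sub, mul_smul, hg]
      | add x y hx hy => rw [add_mul, map_add, hx, hy, add_zero]
    · intro a x _ hx y
      rw [smul_eq_mul, ← mul_assoc, hx]
  exact ⟨QuotientAddGroup.lift (envRel A R f).toAddSubgroup L
    (fun x hx => by simpa using hker x hx 1), L, fun x => rfl, fun a b => rfl⟩

lemma genBy_of_facts (A : Type) [Ring A] (B : Type) [AddCommGroup B] [Module (Env A) B]
    {T : Type} (R : T → Type) [∀ t, Ring (R t)] (f : ∀ t, R t →+* A) (ω : T → B)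
    (hc : ∀ t r, ((1 : A) ⊗ₜ[ℤ] MulOpposite.op (f t r) : Env A) • ω t =
      ((f t r) ⊗ₜ[ℤ] (1 : Aᵐᵒᵖ) : Env A) • ω t)
    (hgen : ∀ (N : Type) [AddCommGroup N] (h h' : B →+ N),
      (∀ t a b, h ((a ⊗ₜ[ℤ] MulOpposite.op b : Env A) • ω t) =
        h' ((a ⊗ₜ[ℤ] MulOpposite.op b : Env A) • ω t)) → h = h')
    (hlift : ∀ (N : Type) [AddCommGroup N] [Module A N] (g : T → A →+ N),
      (∀ t r a, g t (f t r * a) = f t r • g t a) →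
      ∃ h : B →+ N, ∀ t a b, h ((a ⊗ₜ[ℤ] MulOpposite.op b : Env A) • ω t) = a • g t b) :
    GenBy A B R f ω := by
  refine ⟨fun t r => hc t r, fun N _ _ g hg => ?_, fun N _ _ h h' H => ?_⟩
  · obtain ⟨h, hh⟩ := hlift N g hg
    refine ⟨{ toFun := h, map_add' := map_add h, map_smul' := fun c x => ?_ }, fun t b => ?_⟩
    · have := hgen N (h.comp (DistribSMul.toAddMonoidHom B (c ⊗ₜ[ℤ] (1 : Aᵐᵒᵖ) : Env A)))
        ((DistribSMul.toAddMonoidHom N c).comp h) (fun t a b => by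
          simp only [AddMonoidHom.comp_apply, DistribSMul.toAddMonoidHom_apply, hh]
          rw [smul_smul, Algebra.TensorProduct.tmul_mul_tmul, one_mul, hh, mul_smul])
      exact DFunLike.congr_fun this x
    · exact (hh t 1 b).trans (one_smul A _)
  · have h1 : ∀ t (a b : A), ((a ⊗ₜ[ℤ] MulOpposite.op b : Env A) • ω t) =
        (a ⊗ₜ[ℤ] (1 : Aᵐᵒᵖ) : Env A) • ((1 : A) ⊗ₜ[ℤ] MulOpposite.op b : Env A) • ω t := by
      intro t a b
      rw [smul_smul]
      simp
    have := hgen N h.toAddMonoidHom h'.toAddMonoidHom (fun t a b => by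
      rw [h1]
      have h2 : h (a • rmulA A B b (ω t)) = h' (a • rmulA A B b (ω t)) := by
        rw [map_smul, map_smul, H]
      exact h2)
    exact LinearMap.ext fun x => DFunLike.congr_fun this x

lemma ds_lift {E B N : Type} [Ring E] [AddCommGroup B] [Module E B] [AddCommGroup N] {n : ℕ}
    {X : Fin n → Type} [∀ t, AddCommGroup (X t)] [∀ t, Module E (X t)] (e : B ≃ₗ[E] ⨁ t, X t)
    (k' : ∀ t, X t → N) (hk : ∀ t x y, k' t (x + y) = k' t x + k' t y) :
    ∃ h : B →+ N, ∀ t x, h (e.symm (DirectSum.lof E (Fin n) X t x)) = k' t x := by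
  let k : ∀ t, X t →+ N := fun t => AddMonoidHom.mk' (k' t) (hk t)
  refine ⟨(DirectSum.toAddMonoid k).comp e.toAddEquiv.toAddMonoidHom, fun t x => ?_⟩
  change DirectSum.toAddMonoid k (e (e.symm _)) = _
  rw [LinearEquiv.apply_symm_apply]
  exact DirectSum.toAddMonoid_of _ _ _

lemma genBy_of_iso (A : Type) [Ring A] (B : Type) [AddCommGroup B] [Module (Env A) B]
    {n : ℕ} (R : Fin n → Type) [∀ t, Ring (R t)] (f : ∀ t, R t →+* A)
    (e : B ≃ₗ[Env A] ⨁ t : Fin n, TensorAA A (R t) (f t)) :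
    GenBy A B R f (fun t => e.symm (DirectSum.lof (Env A) (Fin n)
      (fun t => TensorAA A (R t) (f t)) t (Submodule.Quotient.mk 1))) := by
  have hsm : ∀ (t : Fin n) (x : Env A), x • (e.symm (DirectSum.lof (Env A) (Fin n)
      (fun t => TensorAA A (R t) (f t)) t (Submodule.Quotient.mk 1))) =
      e.symm (DirectSum.lof (Env A) (Fin n)
      (fun t => TensorAA A (R t) (f t)) t (Submodule.Quotient.mk x)) := by
    intro t x
    rw [← map_smul, ← map_smul, ← Submodule.Quotient.mk_smul, smul_eq_mul, mul_one]
  -- additive generation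
  have hgen : ∀ (N : Type) [AddCommGroup N] (h h' : B →+ N),
      (∀ t a b, h (e.symm (DirectSum.lof (Env A) (Fin n) (fun t => TensorAA A (R t) (f t)) t
        (Submodule.Quotient.mk (a ⊗ₜ[ℤ] MulOpposite.op b)))) =
        h' (e.symm (DirectSum.lof (Env A) (Fin n) (fun t => TensorAA A (R t) (f t)) t
        (Submodule.Quotient.mk (a ⊗ₜ[ℤ] MulOpposite.op b))))) → h = h' := by
    intro N _ h h' H
    have : h.comp e.symm.toAddEquiv.toAddMonoidHom = h'.comp e.symm.toAddEquiv.toAddMonoidHom := by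
      refine DirectSum.addHom_ext fun t y => ?_
      obtain ⟨y, rfl⟩ := Submodule.Quotient.mk_surjective _ y
      induction y using TensorProduct.induction_on with
      | zero => simp
      | tmul a b => exact H t a b.unop
      | add x y hx hy => rw [Submodule.Quotient.mk_add, map_add, map_add, hx, hy, map_add]
    ext x
    have := DFunLike.congr_fun this (e x)
    simpa using this
  refine genBy_of_facts A B R f _ (fun t r => ?_) (fun N _ h h' H => hgen N h h' fun t a b => ?_)
    (fun N _ _ g hg => ?_)
  · rw [hsm, hsm]
    congr 2
    symm
    rw [Submodule.Quotient.eq]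
    exact Submodule.subset_span ⟨r, rfl⟩
  · rw [← hsm]
    exact H t a b
  · have key := fun t => liftT (f t) N (g t) (hg t)
    choose k L hkL hL using key
    obtain ⟨h, hh⟩ := ds_lift (X := fun t => TensorAA A (R t) (f t)) (N := N) e
      (fun t x => k t x) (fun t x y => by
        obtain ⟨x, rfl⟩ := Submodule.Quotient.mk_surjective _ x
        obtain ⟨y, rfl⟩ := Submodule.Quotient.mk_surjective _ y
        rw [← Submodule.Quotient.mk_add, hkL, hkL, hkL, map_add])
    refine ⟨h, fun t a b => ?_⟩
    rw [hsm, hh, hkL, hL]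

lemma precompL_inj {A : Type} [Ring A] {B C : Type} [AddCommGroup B] [Module (Env A) B]
    [AddCommGroup C] [Module (Env A) C] (N : Type) [AddCommGroup N] [Module A N]
    (g : B →ₗ[Env A] C) (hg : Function.Surjective g) : Function.Injective (precompL N g) := by
  intro φ ψ h
  apply HomL.ext
  intro x
  obtain ⟨y, rfl⟩ := hg x
  exact congrArg (fun k => HomL.fn k y) h

lemma ker_step {A : Type} [Ring A] {B' B C : Type} [AddCommGroup B] [Module (Env A) B]
    [AddCommGroup B'] [Module (Env A) B']
    [AddCommGroup C] [Module (Env A) C] (N : Type) [AddCommGroup N] [Module A N]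
    (ε : B →ₗ[Env A] C) (hε : Function.Surjective ε) (ι : B' →ₗ[Env A] B)
    (hι : Function.Injective ι) (hex : Function.Exact ι ε) (hC : Module.Projective A (LeftA A C)) :
    ∃ ρ : LeftA A B →ₗ[A] LeftA A B', ρ.comp (leftMap ι) = LinearMap.id ∧
      Function.Exact (precompL N ε) (precompL N ι) ∧ Function.Surjective (precompL N ι) := by
  obtain ⟨s, hs⟩ := Module.projective_lifting_property (leftMap ε) LinearMap.id hε
  have hs' : ∀ x, leftMap ε (s x) = x := fun x => LinearMap.congr_fun hs x
  have hει : ∀ x, leftMap ε (leftMap ι x) = 0 := fun x => (hex _).mpr ⟨x, rfl⟩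
  obtain ⟨ρ, hρ⟩ := factor_inj (leftMap ι) (leftMap ε) hι hex
    (LinearMap.id - s.comp (leftMap ε)) (by ext x; simp [hs'])
  have hρ' : ∀ x, leftMap ι (ρ x) = x - s (leftMap ε x) := fun x => LinearMap.congr_fun hρ x
  have hret : ∀ x, ρ (leftMap ι x) = x := fun x =>
    (show Function.Injective (leftMap ι) from hι) (by rw [hρ', hει, map_zero, sub_zero])
  refine ⟨ρ, LinearMap.ext hret, fun φ => ⟨fun h => ?_, ?_⟩, fun φ => ?_⟩
  · refine ⟨(show HomL A C N from φ.fn.comp s), HomL.ext fun x => ?_⟩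
    have h1 : φ.fn (leftMap ι (ρ x)) = 0 := congrArg (fun k => HomL.fn k (ρ x)) h
    rw [hρ', map_sub, sub_eq_zero] at h1
    exact h1.symm
  · rintro ⟨ψ, rfl⟩
    refine HomL.ext fun x => ?_
    simp [hει]
  · refine ⟨(show HomL A B N from φ.fn.comp ρ), HomL.ext fun x => ?_⟩
    exact congrArg φ.fn (hret x)

lemma main_ind {A : Type} [Ring A] (M : ModuleCat A) (P : ProjectiveResolution M) (r : ℕ)
    (N : Type) [AddCommGroup N] [Module A N] (d : ℕ) :
    ∀ (B : ℕ → Type) [∀ j, AddCommGroup (B j)] [∀ j, Module (Env A) (B j)]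
      (K : Type) [AddCommGroup K] [Module (Env A) K]
      (δ : ∀ j : ℕ, B (j + 1) →ₗ[Env A] B j) (ε : B 0 →ₗ[Env A] K),
      Function.Surjective ε → Function.Exact (δ 0) ε →
      (∀ j : ℕ, Function.Exact (δ (j + 1)) (δ j)) →
      (∀ j, d ≤ j → Subsingleton (B j)) →
      (∀ j, j < d → Module.Projective A (LeftA A (B j))) →
      (∀ j, j < d → ∀ i, r ≤ i → VE P (i + 1) (HomL A (B j) N)) →
      Module.Projective A (LeftA A K) →
      ∀ i, d + r ≤ i → VE P i (HomL A K N) := by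
  induction d with
  | zero =>
    intro B _ _ K _ _ δ ε hε _ _ hB _ _ _ i _
    have := hB 0 le_rfl
    have : Subsingleton (LeftA A K) := hε.subsingleton
    have h0 : ∀ φ : HomL A K N, φ = 0 := fun φ => HomL.ext fun x => by
      rw [Subsingleton.elim x 0, map_zero, map_zero]
    match i with
    | 0 => exact fun φ _ => LinearMap.ext fun x => h0 _
    | i + 1 => exact fun φ _ => ⟨0, LinearMap.ext fun x => (h0 _).trans (h0 _).symm⟩
  | succ d ih =>
    intro B _ _ K _ _ δ ε hε hex0 hex hB hproj hVE hK i hi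
    obtain ⟨i, rfl⟩ : ∃ k, i = k + 1 := ⟨i - 1, by omega⟩
    let K' := LinearMap.ker ε
    obtain ⟨ρ, hρ, h1, h2⟩ := ker_step N ε hε (B' := K') K'.subtype Subtype.val_injective
      (fun x => by simp [K']) hK
    have hproj0 := hproj 0 (Nat.succ_pos d)
    refine VE_shift P i (precompL N ε) (precompL (B := K') N K'.subtype) (precompL_inj N ε hε) h1 h2 ?_
      (hVE 0 (Nat.succ_pos d) i (by omega))
    · have hmem : ∀ x, δ 0 x ∈ K' := fun x => (hex0 _).mpr ⟨x, rfl⟩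
      refine ih (fun j => B (j + 1)) K' (fun j => δ (j + 1)) ((δ 0).codRestrict K' hmem) ?_ ?_
        (fun j => hex (j + 1)) (fun j hj => hB (j + 1) (by omega))
        (fun j hj => hproj (j + 1) (by omega)) (fun j hj => hVE (j + 1) (by omega))
        (Module.Projective.of_split _ _ hρ) i (by omega)
      · rintro ⟨x, hx⟩
        obtain ⟨y, rfl⟩ := (hex0 x).mp hx
        exact ⟨y, rfl⟩
      · intro x
        rw [← hex 0 x]
        exact Subtype.ext_iff

lemma leftA_self_smul (A : Type) [Ring A] (a : A) (x : LeftA A A) :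
    a • x = (show LeftA A A from a * (show A from x)) := by
  change (a ⊗ₜ[ℤ] (1 : Aᵐᵒᵖ) : Env A) • (show A from x) = _
  change a • ((1 : Aᵐᵒᵖ) • (show A from x)) = _
  rw [one_smul]; rfl

lemma rmulA_self (A : Type) [Ring A] (a : A) (x : LeftA A A) :
    rmulA A A a x = (show LeftA A A from (show A from x) * a) := by
  change (1 : A) • (MulOpposite.op a • (show A from x)) = _
  rw [one_smul]; rfl

/-- `A` as a left module over itself. -/
def leftASelf (A : Type) [Ring A] : A ≃ₗ[A] LeftA A A where
  toFun x := x
  invFun x := x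
  map_add' _ _ := rfl
  map_smul' a x := (leftA_self_smul A a x).symm
  left_inv _ := rfl
  right_inv _ := rfl

/-- `Hom_A(A, N) = N`. -/
noncomputable def homLSelf (A : Type) [Ring A] (N : Type) [AddCommGroup N] [Module A N] :
    HomL A A N ≃ₗ[A] N where
  toFun φ := φ.fn (leftASelf A 1)
  invFun y := (LinearMap.toSpanSingleton A N y).comp (leftASelf A).symm.toLinearMap
  map_add' _ _ := rfl
  map_smul' a φ := by
    rw [HomL.smul_fn, rmulA_self, RingHom.id_apply, ← map_smul, leftA_self_smul]
    congr 1
    change (1 : A) * a = a * 1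
    simp
  left_inv φ := by
    refine HomL.ext fun x => ?_
    change (show A from x) • φ.fn (leftASelf A 1) = φ.fn x
    rw [← map_smul, leftA_self_smul]
    congr 1
    exact mul_one (show A from x)
  right_inv y := one_smul A y

lemma VE_equiv {A : Type} [Ring A] {M : ModuleCat.{0} A} (P : ProjectiveResolution M) (i : ℕ)
    {X Y : Type} [AddCommGroup X] [Module A X] [AddCommGroup Y] [Module A Y]
    (e : X ≃ₗ[A] Y) (h : VE P (i + 1) X) : VE P (i + 1) Y := by
  intro φ hφ
  obtain ⟨ψ, hψ⟩ := h (e.symm.toLinearMap.comp φ) (by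
    rw [LinearMap.comp_assoc, hφ, LinearMap.comp_zero])
  refine ⟨e.toLinearMap.comp ψ, ?_⟩
  rw [LinearMap.comp_assoc, hψ]
  ext x
  simp

/-- given an exact sequence of `(A,A)`-bimodules
`0 → B_d → ... → B_0 → A → 0` in which each `B_j` is a finite direct sum of bimodules
`A ⊗_{A₀} A` for subrings `A₀` over which `A` is free as a left and as a right module,
any left `A`-module `M` whose projective dimension over each occurring `A₀` is `≤ r`
has projective dimension `≤ d + r` over `A`. -/
theorem stmt3 (A : Type) [Ring A] (d r : ℕ)
    (B : ℕ → Type) [∀ j, AddCommGroup (B j)] [∀ j, Module (Env A) (B j)]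
    (n : ℕ → ℕ) (R : ∀ j : ℕ, Fin (n j) → Type) [∀ j t, Ring (R j t)]
    (f : ∀ j t, R j t →+* A)
    (hinj : ∀ j t, Function.Injective (f j t))
    (hfreeL : ∀ j t, Module.Free (R j t)
      ((ModuleCat.restrictScalars (f j t)).obj (ModuleCat.of A A)))
    (hfreeR : ∀ j t, Module.Free (R j t)ᵐᵒᵖ
      ((ModuleCat.restrictScalars (RingHom.op (f j t))).obj (ModuleCat.of Aᵐᵒᵖ Aᵐᵒᵖ)))
    (hiso : ∀ j, j ≤ d →
      Nonempty (B j ≃ₗ[Env A] ⨁ t : Fin (n j), TensorAA A (R j t) (f j t)))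
    (htriv : ∀ j, d < j → Subsingleton (B j))
    (δ : ∀ j : ℕ, B (j + 1) →ₗ[Env A] B j) (ε : B 0 →ₗ[Env A] A)
    (hsurj : Function.Surjective ε)
    (hexact0 : Function.Exact (δ 0) ε)
    (hexact : ∀ j : ℕ, Function.Exact (δ (j + 1)) (δ j))
    (M : ModuleCat A)
    (hM : ∀ j, j ≤ d → ∀ t, projDimLE (R j t)
      ((ModuleCat.restrictScalars (f j t)).obj M) r) :
    projDimLE A M (d + r) := by
  intro N i hi
  obtain ⟨i, rfl⟩ : ∃ k, i = k + 1 := ⟨i - 1, by omega⟩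
  let P : ProjectiveResolution M := ProjectiveResolution.of M
  rw [ext_iff_VE A M N P]
  apply VE_equiv P i (homLSelf A N)
  have hG : ∀ j, j ≤ d → ∃ ω, GenBy A (B j) (R j) (f j) ω := fun j hj =>
    (hiso j hj).elim fun e => ⟨_, genBy_of_iso A (B j) (R j) (f j) e⟩
  refine main_ind M P r N (d + 1) B A δ ε hsurj hexact0 hexact (fun j hj => htriv j hj)
    (fun j hj => ?_) (fun j hj i hi => ?_) (Module.Projective.of_equiv (leftASelf A)) (i + 1)
    (by omega)
  · obtain ⟨ω, hω⟩ := hG j (by omega)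
    exact hω.projective (hfreeL j)
  · obtain ⟨ω, hω⟩ := hG j (by omega)
    exact hω.VE (hfreeL j) M N P i (fun t => hM j (by omega) t _ (i + 1) (by omega))
end

section
/- Let R ⊆ S be a free α-Frobenius extension of rings. Then R and S have the same self-injective dimension: the injective dimension of S as a left (resp. right) S-module equals the injective dimension of R as a left (resp. right) R-module. -/
open CategoryTheory

/-- `N` has injective dimension `≤ r` over `A`, expressed via vanishing of `Ext^i(-, N)`
for `i > r`. -/
def injDimLE (A : Type) [Ring A] (N : ModuleCat A) (r : ℕ) : Prop :=
  ∀ (M : ModuleCat A) (i : ℕ), r < i → Subsingleton (extMod A i M N)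

/-- An additive map `ψ : S → R` is left `R`-linear for the `α`-twisted `R`-action on the
target, i.e. `ψ(r·x) = α(r)·ψ(x)`; these are the elements of `Hom_R(S, _αR)`. -/
def IsTwistedRLinear {S : Type} [Ring S] {R : Subring S} (α : R ≃+* R)
    (ψ : S →+ R) : Prop :=
  ∀ (r : R) (x : S), ψ ((r : S) * x) = α r * ψ x

section Aux

open Limits

lemma subsingleton_ext_iff_aux (A : Type) [Ring A] (M N : ModuleCat.{0} A) (i : ℕ) :
    Subsingleton (extMod A (i+1) M N) ↔ Subsingleton (Abelian.Ext.{0} M N (i+1)) := by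
  let P := projectiveResolution M
  have h1 : Subsingleton (extMod A (i+1) M N) ↔
      ∀ f : P.complex.X (i+1) ⟶ N, P.complex.d (i+2) (i+1) ≫ f = 0 →
        ∃ g : P.complex.X i ⟶ N, P.complex.d (i+1) i ≫ g = f := by
    rw [← ModuleCat.isZero_iff_subsingleton, extMod, (P.isoExt (R := ℤ) (i+1) N).isZero_iff,
      ← HomologicalComplex.exactAt_iff_isZero_homology,
      HomologicalComplex.exactAt_iff' _ i (i+1) (i+2) (by simp) (by simp),
      ShortComplex.moduleCat_exact_iff]
    rfl
  rw [h1]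
  constructor
  · intro h
    refine subsingleton_of_forall_eq 0 fun e => ?_
    obtain ⟨f, hf, rfl⟩ := P.extMk_surjective e (i+2) rfl
    rw [P.extMk_eq_zero_iff f _ _ hf i rfl]
    exact h f hf
  · intro h f hf
    rw [← P.extMk_eq_zero_iff f (i+2) rfl hf i rfl]
    exact Subsingleton.elim _ _

lemma injDimLE_iff_aux (A : Type) [Ring A] (N : ModuleCat.{0} A) (r : ℕ) :
    injDimLE A N r ↔ HasInjectiveDimensionLE N r := by
  constructor
  · intro h
    refine hasInjectiveDimensionLT_of_enoughProjectives N (r+1) fun Y => ?_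
    exact (subsingleton_ext_iff_aux A Y N r).1 (h Y (r+1) (Nat.lt_succ_self r))
  · intro h M i hi
    obtain ⟨j, rfl⟩ : ∃ j, i = j + 1 := ⟨i - 1, by omega⟩
    rw [subsingleton_ext_iff_aux]
    have : HasInjectiveDimensionLT N (r+1) := h
    exact HasInjectiveDimensionLT.subsingleton N (r+1) (j+1) hi M

lemma injDim_map_aux {C D : Type 1} [Category.{0} C] [Category.{0} D] [Abelian C] [Abelian D]
    [EnoughInjectives C] [HasExt.{0} C] [HasExt.{0} D]
    (F : C ⥤ D) [F.PreservesZeroMorphisms]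
    (hF : ∀ T : ShortComplex C, T.ShortExact → (T.map F).ShortExact)
    (hI : ∀ I : C, Injective I → Injective (F.obj I)) (r : ℕ) (X : C)
    (h : HasInjectiveDimensionLE X r) : HasInjectiveDimensionLE (F.obj X) r := by
  induction r generalizing X with
  | zero =>
    simp only [HasInjectiveDimensionLE, zero_add,
      ← injective_iff_hasInjectiveDimensionLT_one] at h ⊢
    exact hI X h
  | succ r ih =>
    let ⟨p⟩ := EnoughInjectives.presentation X
    have hs : (ShortComplex.mk _ _ (cokernel.condition p.f)).ShortExact :=
      { exact := ShortComplex.exact_cokernel p.f }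
    have h3 := (hs.hasInjectiveDimensionLT_X₃_iff r (by exact p.injective)).2 h
    exact ((hF _ hs).hasInjectiveDimensionLT_X₃_iff r (hI _ p.injective)).1 (ih _ h3)

/-- restriction along a ring hom with right basis preserves injectives -/
lemma restrict_injective_aux {A B : Type} [Ring A] [Ring B] (f : A →+* B) (n : ℕ) (y : Fin n → B)
    (hy : ∀ s : B, ∃! c : Fin n → A, s = ∑ i, y i * f (c i))
    (I : ModuleCat.{0} B) (hI : Injective I) :
    Injective ((ModuleCat.restrictScalars f).obj I) := by
  rw [← Module.injective_iff_injective_object, ← Module.Baer.iff_injective] at *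
  choose c hc hu using hy
  have huniq : ∀ (d : Fin n → A), c (∑ i, y i * f (d i)) = d := fun d =>
    (hu _ d rfl).symm
  have cadd : ∀ s t, c (s + t) = c s + c t := fun s t => by
    refine (hu _ _ ?_).symm
    simp only [Pi.add_apply, map_add, mul_add, Finset.sum_add_distrib, ← hc]
  have cmulf : ∀ s a, c (s * f a) = fun i => c s i * a := fun s a => by
    refine (hu _ _ ?_).symm
    simp only [map_mul, ← mul_assoc, ← Finset.sum_mul, ← hc]
  have c0 : c 0 = 0 := by simpa using cadd 0 0
  have csum : ∀ (g : Fin n → B) , c (∑ i, g i) = ∑ i, c (g i) := fun g =>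
    map_sum (AddMonoidHom.mk' c cadd) g _
  have csm : ∀ s t k, c (s * t) k = ∑ i, c (s * y i) k * c t i := fun s t k => by
    conv_lhs => rw [hc t, Finset.mul_sum, csum]
    simp [← mul_assoc, cmulf]
  intro J g
  let K : Ideal B :=
    { carrier := {s | ∀ k, c s k ∈ J}
      add_mem' := fun {a b} ha hb k => by rw [cadd]; exact J.add_mem (ha k) (hb k)
      zero_mem' := fun k => by rw [c0]; exact J.zero_mem
      smul_mem' := fun s t ht k => by
        rw [smul_eq_mul, csm]; exact J.sum_mem fun i _ => J.mul_mem_left _ (ht i) }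
  let g' : J → I := g
  have g'add : ∀ a b, g' (a + b) = g' a + g' b := fun a b => g.map_add a b
  have g'smul : ∀ (a : A) b, g' (a • b) = f a • g' b := fun a b => g.map_smul a b
  have g'sum : ∀ (u : Fin n → J), g' (∑ i, u i) = ∑ i, g' (u i) := fun u =>
    map_sum (AddMonoidHom.mk' g' g'add) u _
  let G : K →ₗ[B] I :=
    { toFun := fun s => ∑ k, y k • g' ⟨c s.1 k, s.2 k⟩
      map_add' := fun s t => by
        rw [← Finset.sum_add_distrib]
        refine Finset.sum_congr rfl fun k _ => ?_
        rw [← smul_add, ← g'add]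
        congr 2
        exact Subtype.ext (congrFun (cadd _ _) k)
      map_smul' := fun s t => by
        have e : ∀ k, g' ⟨c (s • t : K).1 k, (s • t).2 k⟩ =
            ∑ i, f (c (s * y i) k) • g' ⟨c t.1 i, t.2 i⟩ := fun k => by
          simp only [← g'smul]
          rw [← g'sum]
          congr 1
          apply Subtype.ext
          simp [csm s t.1 k]
        simp only [e, RingHom.id_apply, Finset.smul_sum, smul_smul]
        rw [Finset.sum_comm]
        refine Finset.sum_congr rfl fun i _ => ?_
        rw [← Finset.sum_smul, ← hc] }
  obtain ⟨h, hh⟩ := hI K G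
  refine ⟨{ toFun := fun a => h (f a), map_add' := fun a b => by rw [map_add, map_add]; rfl, map_smul' := fun a b => ?_ }, ?_⟩
  · rw [smul_eq_mul, map_mul, ← smul_eq_mul (f a), map_smul]; rfl
  · intro a ha
    have c1 : ∀ k, c (f a) k = c 1 k * a := fun k => by
      rw [← one_mul (f a), cmulf]
    have hK : f a ∈ K := fun k => by rw [c1]; exact J.mul_mem_left _ ha
    refine (hh (f a) hK).trans ?_
    change ∑ k, y k • g' _ = g' ⟨a, ha⟩
    have e : ∀ k, g' ⟨c (f a) k, hK k⟩ = f (c 1 k) • g' ⟨a, ha⟩ := fun k => by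
      rw [← g'smul]
      congr 1
      exact Subtype.ext (c1 k)
    simp only [e, smul_smul]
    rw [← Finset.sum_smul, ← hc, one_smul]

lemma restrict_exact_aux {A B : Type} [Ring A] [Ring B] (f : A →+* B)
    (T : ShortComplex (ModuleCat.{0} B)) (h : T.ShortExact) :
    (T.map (ModuleCat.restrictScalars f)).ShortExact := by
  have := h.mono_f
  have := h.epi_g
  have e := h.exact
  refine ShortComplex.ShortExact.mk' ?_ ?_ ?_
  · rw [ShortComplex.ShortExact.moduleCat_exact_iff_function_exact] at e ⊢
    exact e
  · have := (ModuleCat.mono_iff_injective T.f).1 inferInstance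
    exact (ModuleCat.mono_iff_injective _).2 this
  · have := (ModuleCat.epi_iff_surjective T.g).1 inferInstance
    exact (ModuleCat.epi_iff_surjective _).2 this

/-- coordinates for a left basis, as a module equivalence -/
noncomputable def coordEquivAux {A B : Type} [Ring A] [Ring B] (f : A →+* B) (n : ℕ) (x : Fin n → B)
    (hx : ∀ s : B, ∃! c : Fin n → A, s = ∑ i, f (c i) * x i) :
    (Fin n → A) ≃ₗ[A] ((ModuleCat.restrictScalars f).obj (ModuleCat.of B B)) :=
  LinearEquiv.ofBijective (M₂ := ((ModuleCat.restrictScalars f).obj (ModuleCat.of B B)))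
    (M := Fin n → A)
    { toFun := fun c => (∑ i, f (c i) * x i : B)
      map_add' := fun c d => by
        simp only [Pi.add_apply, map_add, add_mul, Finset.sum_add_distrib]; rfl
      map_smul' := fun a c => by
        simp only [Pi.smul_apply, smul_eq_mul, map_mul, mul_assoc, ← Finset.mul_sum]; rfl }
    ⟨fun c d h => by
        obtain ⟨e, he, hu⟩ := hx (∑ i, f (c i) * x i)
        rw [hu c rfl, hu d h], fun s => by
        obtain ⟨c, hc, -⟩ := hx s
        exact ⟨c, hc.symm⟩⟩

lemma coextend_exact_aux {A B : Type} [Ring A] [Ring B] (f : A →+* B)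
    [hp : Module.Projective A ((ModuleCat.restrictScalars f).obj (ModuleCat.of B B))]
    (T : ShortComplex (ModuleCat.{0} A)) (h : T.ShortExact) :
    (T.map (ModuleCat.coextendScalars f)).ShortExact := by
  have := h.mono_f
  have := h.epi_g
  have e := h.exact
  have hinj := (ModuleCat.mono_iff_injective T.f).1 inferInstance
  have hsurj := (ModuleCat.epi_iff_surjective T.g).1 inferInstance
  rw [ShortComplex.ShortExact.moduleCat_exact_iff_function_exact] at e
  refine ShortComplex.ShortExact.mk' ?_ ?_ ?_
  · rw [ShortComplex.ShortExact.moduleCat_exact_iff_function_exact]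
    intro (ψ : ((ModuleCat.restrictScalars f).obj (ModuleCat.of B B)) →ₗ[A] T.X₂)
    constructor
    · intro (hψ : T.g.hom ∘ₗ ψ = 0)
      have h1 : ∀ u, ∃ v, T.f v = ψ u := fun u =>
        (e (ψ u)).1 (LinearMap.congr_fun hψ u)
      choose v hv using h1
      refine ⟨({ toFun := v, map_add' := fun a b => hinj ?_, map_smul' := fun a b => hinj ?_ } :
        ((ModuleCat.restrictScalars f).obj (ModuleCat.of B B)) →ₗ[A] T.X₁), ?_⟩
      · rw [map_add]; simp only [hv, map_add]
      · rw [map_smul]; simp only [hv, map_smul]; rfl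
      · exact LinearMap.ext hv
    · rintro ⟨χ, rfl⟩
      exact LinearMap.ext fun u => (e _).2 ⟨_, rfl⟩
  · refine (ModuleCat.mono_iff_injective _).2 ?_
    intro (a : ((ModuleCat.restrictScalars f).obj (ModuleCat.of B B)) →ₗ[A] T.X₁)
      (b : ((ModuleCat.restrictScalars f).obj (ModuleCat.of B B)) →ₗ[A] T.X₁)
      (hab : T.f.hom ∘ₗ a = T.f.hom ∘ₗ b)
    exact LinearMap.ext fun u => hinj (LinearMap.congr_fun hab u)
  · refine (ModuleCat.epi_iff_surjective _).2 ?_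
    intro (ψ : ((ModuleCat.restrictScalars f).obj (ModuleCat.of B B)) →ₗ[A] T.X₃)
    obtain ⟨χ, hχ⟩ := Module.projective_lifting_property T.g.hom ψ hsurj
    exact ⟨χ, hχ⟩

lemma coextend_injective_aux {A B : Type} [Ring A] [Ring B] (f : A →+* B)
    (I : ModuleCat.{0} A) (hI : Injective I) :
    Injective ((ModuleCat.coextendScalars f).obj I) := by
  have : (ModuleCat.restrictScalars f).PreservesMonomorphisms :=
    ⟨fun {X Y} g hg => (ModuleCat.mono_iff_injective _).2 ((ModuleCat.mono_iff_injective g).1 hg)⟩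
  exact (ModuleCat.restrictCoextendScalarsAdj.{0} f).map_injective I hI

theorem core_aux {A B : Type} [Ring A] [Ring B] (f : A →+* B) (n : ℕ) (x y : Fin n → B)
    (hx : ∀ s : B, ∃! c : Fin n → A, s = ∑ i, f (c i) * x i)
    (hy : ∀ s : B, ∃! c : Fin n → A, s = ∑ i, y i * f (c i))
    (hAB : Subsingleton B → Subsingleton A)
    (φ : B →+ A) (hφ : ∀ a u, φ (f a * u) = a * φ u)
    (hψ : ∀ ψ : B →+ A, (∀ a u, ψ (f a * u) = a * ψ u) → ∃! s : B, ∀ u, ψ u = φ (u * s))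
    (r : ℕ) :
    injDimLE B (ModuleCat.of B B) r ↔ injDimLE A (ModuleCat.of A A) r := by
  rw [injDimLE_iff_aux, injDimLE_iff_aux]
  constructor
  · intro h
    rcases Nat.eq_zero_or_pos n with rfl | hn
    · have hB : Subsingleton B := ⟨fun a b => by
        obtain ⟨c, hc, -⟩ := hx a
        obtain ⟨d, hd, -⟩ := hx b
        rw [hc, hd]; simp⟩
      have := hAB hB
      have : IsZero (ModuleCat.of A A) := ModuleCat.isZero_of_subsingleton _
      have h0 : HasInjectiveDimensionLT (ModuleCat.of A A) 0 :=
        (hasInjectiveDimensionLT_zero_iff_isZero _).2 this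
      exact hasInjectiveDimensionLT_of_ge _ 0 _ (Nat.zero_le _)
    · have h1 := injDim_map_aux (ModuleCat.restrictScalars f) (restrict_exact_aux f)
        (restrict_injective_aux f n y hy) r _ h
      let e := coordEquivAux f n x hx
      let i0 : Fin n := ⟨0, hn⟩
      let ret : Retract (ModuleCat.of A A) ((ModuleCat.restrictScalars f).obj (ModuleCat.of B B)) :=
        { i := ModuleCat.ofHom (Y := (ModuleCat.restrictScalars f).obj (ModuleCat.of B B)) (e.toLinearMap ∘ₗ LinearMap.single A (fun _ => A) i0)
          r := ModuleCat.ofHom (X := (ModuleCat.restrictScalars f).obj (ModuleCat.of B B)) (LinearMap.proj i0 ∘ₗ e.symm.toLinearMap)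
          retract := by
            ext
            change (e.symm (e (Pi.single i0 (1 : A)))) i0 = (1 : A)
            rw [e.symm_apply_apply, Pi.single_eq_same] }
      have : HasInjectiveDimensionLT ((ModuleCat.restrictScalars f).obj (ModuleCat.of B B)) (r+1) :=
        h1
      exact ret.hasInjectiveDimensionLT (r+1)
  · intro h
    have : Module.Projective A ((ModuleCat.restrictScalars f).obj (ModuleCat.of B B)) :=
      Module.Projective.of_equiv (coordEquivAux f n x hx)
    have h1 := injDim_map_aux (ModuleCat.coextendScalars f) (coextend_exact_aux f)
      (coextend_injective_aux f) r _ h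
    let L : B → (((ModuleCat.restrictScalars f).obj (ModuleCat.of B B)) →ₗ[A] A) := fun s =>
      { toFun := fun (u : B) => φ (u * s)
        map_add' := fun (u v : B) => (congrArg φ (add_mul u v s)).trans (map_add φ _ _)
        map_smul' := fun a (u : B) => (congrArg φ (mul_assoc (f a) u s)).trans (hφ _ _) }
    let E : B →ₗ[B] (ModuleCat.coextendScalars f).obj (ModuleCat.of A A) :=
      { toFun := fun s => L s
        map_add' := fun s t => LinearMap.ext fun (u : B) =>
          (congrArg φ (mul_add u s t)).trans (map_add φ _ _)
        map_smul' := fun t s => LinearMap.ext fun (u : B) => congrArg φ (mul_assoc u t s).symm }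
    have hE : Function.Bijective E := by
      constructor
      · intro s t hst
        obtain ⟨w, -, hw⟩ := hψ (AddMonoidHom.mk' (fun u => φ (u * s))
          (fun u v => by rw [add_mul, map_add])) (fun a u => by simp [mul_assoc, hφ])
        rw [hw s fun u => rfl, hw t fun u => ?_]
        exact LinearMap.congr_fun (show L s = L t from hst) u
      · intro (ψ : ((ModuleCat.restrictScalars f).obj (ModuleCat.of B B)) →ₗ[A] A)
        obtain ⟨s, hs, -⟩ := hψ (AddMonoidHom.mk' (fun u : B => ψ u) (fun u v => ψ.map_add u v))
          (fun a u => ψ.map_smul a u)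
        exact ⟨s, LinearMap.ext fun u => (hs u).symm⟩
    exact (ModuleCat.hasInjectiveDimensionLE_iff_of_linearEquiv
      (M := ModuleCat.of B B) (N := (ModuleCat.coextendScalars f).obj (ModuleCat.of A A))
      (LinearEquiv.ofBijective E hE) r).2 h1

end Aux

/-- let `R ⊆ S` be a free `α`-Frobenius extension (i.e. `S` is finitely
generated free as a left and as a right `R`-module, and `S ≅ Hom_R(S, _αR)` as
`(S,R)`-bimodules, the isomorphism being given here by `Φ`).  Then `R` and `S` have the
same self-injective dimension, as left and as right modules over themselves. -/
theorem stmt11 (S : Type) [Ring S] (R : Subring S) (α : R ≃+* R) (n : ℕ)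
    (x y : Fin n → S)
    (hx : ∀ s : S, ∃! c : Fin n → R, s = ∑ i, (c i : S) * x i)
    (hy : ∀ s : S, ∃! c : Fin n → R, s = ∑ i, y i * (c i : S))
    (Φ : S → (S →+ R))
    (hΦtw : ∀ s : S, IsTwistedRLinear α (Φ s))
    (hΦbij : ∀ ψ : S →+ R, IsTwistedRLinear α ψ → ∃! s : S, Φ s = ψ)
    (hΦadd : ∀ s t : S, Φ (s + t) = Φ s + Φ t)
    (hΦS : ∀ s t u : S, Φ (t * s) u = Φ s (u * t))
    (hΦR : ∀ (s : S) (r : R) (u : S), Φ (s * (r : S)) u = Φ s u * r) :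
    (∀ r : ℕ, injDimLE S (ModuleCat.of S S) r ↔ injDimLE R (ModuleCat.of R R) r) ∧
      (∀ r : ℕ, injDimLE Sᵐᵒᵖ (ModuleCat.of Sᵐᵒᵖ Sᵐᵒᵖ) r ↔
        injDimLE (↥R)ᵐᵒᵖ (ModuleCat.of (↥R)ᵐᵒᵖ (↥R)ᵐᵒᵖ) r) := by
  obtain ⟨φ, hφdef⟩ : ∃ φ, φ = Φ 1 := ⟨_, rfl⟩
  have hΦφ : ∀ s u, Φ s u = φ (u * s) := fun s u => by
    rw [hφdef, ← hΦS 1 s u, mul_one]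
  have hφl : ∀ (r : R) (u : S), φ (r * u) = α r * φ u := fun r u => by
    rw [hφdef]; exact hΦtw 1 r u
  have hφr : ∀ (r : R) (u : S), φ (u * r) = φ u * r := fun r u => by
    have := hΦR 1 r u
    rwa [one_mul, hΦφ, ← hφdef] at this
  have hsub : Subsingleton S → Subsingleton R := fun h =>
    ⟨fun a b => Subtype.ext (Subsingleton.elim _ _)⟩
  constructor
  · refine core_aux (R.subtype.comp (α.symm : R →+* R)) n x y ?_ ?_ hsub φ ?_ ?_
    · intro s
      obtain ⟨c, hc, hu⟩ := hx s
      refine ⟨fun i => α (c i), by simpa using hc, fun d hd => ?_⟩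
      have := hu (fun i => α.symm (d i)) (by simpa using hd)
      funext i
      rw [← this]; simp
    · intro s
      obtain ⟨c, hc, hu⟩ := hy s
      refine ⟨fun i => α (c i), by simpa using hc, fun d hd => ?_⟩
      have := hu (fun i => α.symm (d i)) (by simpa using hd)
      funext i
      rw [← this]; simp
    · intro a u
      have := hφl (α.symm a) u
      simpa using this
    · intro ψ hψ
      obtain ⟨s, hs, hu⟩ := hΦbij ψ (fun r u => by simpa using hψ (α r) u)
      refine ⟨s, fun u => by rw [← hs, hΦφ], fun t ht => hu t ?_⟩
      ext u
      rw [hΦφ, ht]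
  · -- dual bases
    choose cx hcx hcu using hx
    have cadd : ∀ s t, cx (s + t) = cx s + cx t := fun s t => by
      refine (hcu _ _ ?_).symm
      simp only [Pi.add_apply, Subring.coe_add, add_mul, Finset.sum_add_distrib, ← hcx]
    have cmul : ∀ (r : R) s, cx (r * s) = fun i => r * cx s i := fun r s => by
      refine (hcu _ _ ?_).symm
      simp only [Subring.coe_mul, mul_assoc, ← Finset.mul_sum, ← hcx]
    have hz : ∀ i, ∃ z, ∀ u, φ (u * z) = α (cx u i) := fun i => by
      obtain ⟨z, hz, -⟩ := hΦbij (AddMonoidHom.mk' (fun u => α (cx u i))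
        (fun u v => by rw [cadd, Pi.add_apply, map_add]))
        (fun r u => by simp [cmul])
      exact ⟨z, fun u => by rw [← hΦφ, hz]; rfl⟩
    choose z hz using hz
    have hd1 : ∀ u : S, u = ∑ i, (α.symm (φ (u * z i)) : S) * x i := fun u => by
      simp only [hz, RingEquiv.symm_apply_apply]
      exact hcx u
    have hinj : ∀ w w', (∀ v, φ (v * w) = φ (v * w')) → w = w' := fun w w' h => by
      obtain ⟨s, -, hu⟩ := hΦbij (Φ w) (hΦtw w)
      rw [hu w rfl, hu w' ?_]
      ext v
      rw [hΦφ, hΦφ, h]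
    have hd2 : ∀ u : S, u = ∑ i, z i * (φ (x i * u) : S) := fun u => by
      apply hinj
      intro v
      have h1 : v * ∑ i, z i * (φ (x i * u) : S) = ∑ i, v * z i * (φ (x i * u) : S) := by
        simp only [Finset.mul_sum, mul_assoc]
      rw [h1, map_sum]
      simp only [hφr]
      conv_lhs => rw [hd1 v, Finset.sum_mul, map_sum]
      simp only [mul_assoc, hφl, RingEquiv.apply_symm_apply]
    refine core_aux (RingHom.op R.subtype) n (fun i => MulOpposite.op (y i))
      (fun i => MulOpposite.op (x i)) ?_ ?_ ?_
      ((MulOpposite.opAddEquiv.toAddMonoidHom.comp φ).comp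
        MulOpposite.opAddEquiv.symm.toAddMonoidHom) ?_ ?_
    · intro s
      obtain ⟨c, hc, hu⟩ := hy s.unop
      refine ⟨fun i => MulOpposite.op (c i), ?_, fun d hd => ?_⟩
      · apply MulOpposite.unop_injective
        simpa using hc
      · have := hu (fun i => (d i).unop) (by simpa using congrArg MulOpposite.unop hd)
        funext i
        rw [← this]; simp
    · intro s
      refine ⟨fun i => MulOpposite.op (cx s.unop i), ?_, fun d hd => ?_⟩
      · apply MulOpposite.unop_injective
        simpa using hcx s.unop
      · have := hcu s.unop (fun i => (d i).unop) (by simpa using congrArg MulOpposite.unop hd)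
        funext i
        rw [← this]; simp
    · intro h
      have : Subsingleton S := MulOpposite.opEquiv.subsingleton
      have := hsub this
      infer_instance
    · intro a u
      apply MulOpposite.unop_injective
      simpa using hφr a.unop u.unop
    · intro ψ hψ
      obtain ⟨ψ', hψ'⟩ : ∃ ψ' : S → R, ∀ u, ψ' u = (ψ (MulOpposite.op u)).unop := ⟨_, fun _ => rfl⟩
      have hsum : ∀ g : Fin n → S, ψ' (∑ i, g i) = ∑ i, ψ' (g i) := fun g => by
        simp [hψ']
      have hr : ∀ (r : R) u, ψ' (u * r) = ψ' u * r := fun r u => by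
        have := congrArg MulOpposite.unop (hψ (MulOpposite.op r) (MulOpposite.op u))
        simpa [hψ'] using this
      refine ⟨MulOpposite.op (∑ i, (α.symm (ψ' (z i)) : S) * x i), fun u => ?_, fun t ht => ?_⟩
      · apply MulOpposite.unop_injective
        have h1 : ψ' u.unop = φ ((∑ i, (α.symm (ψ' (z i)) : S) * x i) * u.unop) := by
          conv_lhs => rw [hd2 u.unop, hsum]
          simp only [hr, Finset.sum_mul, map_sum, mul_assoc, hφl, RingEquiv.apply_symm_apply]
        rw [hψ'] at h1
        simpa using h1
      · apply MulOpposite.unop_injective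
        rw [hd1 t.unop]
        simp only [MulOpposite.unop_op]
        refine Finset.sum_congr rfl fun i _ => ?_
        have h1 := congrArg MulOpposite.unop (ht (MulOpposite.op (z i)))
        have h2 : ψ' (z i) = φ (t.unop * z i) := by
          rw [hψ']; simpa using h1
        rw [h2]
end
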